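/- Let M ∈ ℂ^{s×n} with s ≤ n have full row rank s. Then the set of real matrices Y ∈ ℝ^{n×s} for which the s×s complex matrix M·Y is singular (det(MY) = 0) has Lebesgue measure zero in ℝ^{n×s} ≅ ℝ^{ns}. -/

import Mathlib

open Matrix MeasureTheory

/-!
The map `Y ↦ det (M * Y)` is real-analytic. It is not identically zero: the columns of `M` span, so
some of them form a basis, and the 0-1 matrix `Y` selecting these columns makes `M * Y` invertible.
The zero set of a real-analytic function `f` with `f x₀ ≠ 0` is null: on each line
`t ↦ x₀ + t • v` the function vanishes only for a discrete set of `t`, so by Fubini there is some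
`t ≠ 0` with `f (x₀ + t • v) ≠ 0` for almost every `v`, and `v ↦ x₀ + t • v` preserves null sets.
-/

section AnalyticZeroSets

variable {E F : Type*} [NormedAddCommGroup E] [NormedSpace ℝ E]
  [NormedAddCommGroup F] [NormedSpace ℝ F]

theorem ae_mem_of_forall_ae_add_smul_mem [MeasurableSpace E] [BorelSpace E]
    [FiniteDimensional ℝ E] (μ : Measure E) [μ.IsAddHaarMeasure] {s : Set E}
    (hs : MeasurableSet s) (x₀ : E) (h : ∀ v : E, ∀ᵐ t : ℝ, x₀ + t • v ∈ s) :
    ∀ᵐ x ∂μ, x ∈ s := by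
  have hmeas : MeasurableSet {p : E × ℝ | x₀ + p.2 • p.1 ∈ s} := by
    have hcont : Continuous fun p : E × ℝ => x₀ + p.2 • p.1 := by fun_prop
    exact hcont.measurable hs
  have hswap : ∀ᵐ t : ℝ, ∀ᵐ v ∂μ, x₀ + t • v ∈ s :=
    (Measure.ae_ae_comm hmeas).1 (ae_of_all μ h)
  obtain ⟨t, ht, ht0⟩ := (hswap.and (Measure.ae_ne volume 0)).exists
  have hquasi : Measure.QuasiMeasurePreserving (fun x => t⁻¹ • (-x₀ + x)) μ μ :=
    (Measure.quasiMeasurePreserving_smul μ (inv_ne_zero ht0)).comp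
      (measurePreserving_add_left μ (-x₀)).quasiMeasurePreserving
  filter_upwards [hquasi.ae ht] with x hx
  simpa [smul_inv_smul₀ ht0] using hx

theorem ae_ne_zero_of_analyticOnNhd_real {f : ℝ → F} (hf : AnalyticOnNhd ℝ f Set.univ) {t₀ : ℝ}
    (ht₀ : f t₀ ≠ 0) : ∀ᵐ t : ℝ, f t ≠ 0 := by
  have hcodiscrete : f ⁻¹' {0}ᶜ ∈ Filter.codiscrete ℝ := hf.preimage_zero_mem_codiscrete ht₀
  rw [← Measure.restrict_univ (μ := volume)]
  exact ae_restrict_le_codiscreteWithin MeasurableSet.univ hcodiscrete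

theorem ae_ne_zero_of_analyticOnNhd [MeasurableSpace E] [BorelSpace E] [FiniteDimensional ℝ E]
    (μ : Measure E) [μ.IsAddHaarMeasure] {f : E → F} (hf : AnalyticOnNhd ℝ f Set.univ) {x₀ : E}
    (hx₀ : f x₀ ≠ 0) : ∀ᵐ x ∂μ, f x ≠ 0 := by
  have hopen : IsOpen {x | f x ≠ 0} :=
    isOpen_compl_singleton.preimage (continuousOn_univ.1 hf.continuousOn)
  refine ae_mem_of_forall_ae_add_smul_mem μ hopen.measurableSet x₀ fun v => ?_
  have hline : AnalyticOnNhd ℝ (fun t : ℝ => f (x₀ + t • v)) Set.univ :=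
    hf.comp (fun t _ => by fun_prop) (Set.mapsTo_univ _ _)
  exact ae_ne_zero_of_analyticOnNhd_real hline (t₀ := 0) (by simpa using hx₀)

end AnalyticZeroSets

theorem analyticOnNhd_matrix_det {𝕜 E A ι : Type*} [NontriviallyNormedField 𝕜]
    [NormedAddCommGroup E] [NormedSpace 𝕜 E] [NormedCommRing A] [NormedAlgebra 𝕜 A]
    [Fintype ι] [DecidableEq ι] {s : Set E} {f : E → Matrix ι ι A}
    (hf : ∀ i j, AnalyticOnNhd 𝕜 (fun x => f x i j) s) :
    AnalyticOnNhd 𝕜 (fun x => (f x).det) s := by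
  simp only [det_apply']
  exact Finset.analyticOnNhd_fun_sum _ fun σ _ =>
    analyticOnNhd_const.mul (Finset.analyticOnNhd_fun_prod _ fun i _ => hf (σ i) i)

theorem exists_det_submatrix_ne_zero_of_rank_eq_card {K m n : Type*} [Field K] [Fintype m]
    [DecidableEq m] [Fintype n] {M : Matrix m n K} (hM : M.rank = Fintype.card m) :
    ∃ e : m → n, (M.submatrix id e).det ≠ 0 := by
  obtain ⟨κ, a, ha, hspan, hli⟩ := exists_linearIndependent' K M.col
  have : Fintype κ := Fintype.ofInjective a ha
  have hcard : Fintype.card m = Fintype.card κ := by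
    rw [← hM, rank_eq_finrank_span_cols, ← hspan, finrank_span_eq_card hli]
  let b : m ≃ κ := Fintype.equivOfCardEq hcard
  have hcols : LinearIndependent K (M.submatrix id (a ∘ b)).col := hli.comp b b.injective
  exact ⟨a ∘ b, ((isUnit_iff_isUnit_det _).1 (linearIndependent_cols_iff_isUnit.1 hcols)).ne_zero⟩

theorem exists_det_mul_map_algebraMap_ne_zero (R : Type*) {K m n : Type*} [CommSemiring R]
    [Field K] [Algebra R K] [Fintype m] [DecidableEq m] [Fintype n] {M : Matrix m n K}
    (hM : M.rank = Fintype.card m) :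
    ∃ Y : Matrix n m R, (M * Y.map (algebraMap R K)).det ≠ 0 := by
  classical
  obtain ⟨e, he⟩ := exists_det_submatrix_ne_zero_of_rank_eq_card hM
  refine ⟨(1 : Matrix n n R).submatrix id e, ?_⟩
  have hselect : M * ((1 : Matrix n n R).submatrix id e).map (algebraMap R K) =
      M.submatrix id e := by
    ext i j
    simp [mul_apply, one_apply]
  rwa [hselect]

theorem analyticOnNhd_det_mul_map_algebraMap {𝕜 A m n : Type*} [NontriviallyNormedField 𝕜]
    [NormedCommRing A] [NormedAlgebra 𝕜 A] [Fintype m] [DecidableEq m] [Fintype n]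
    (M : Matrix m n A) (s : Set (n → m → 𝕜)) :
    AnalyticOnNhd 𝕜 (fun Y : n → m → 𝕜 => (M * (of Y).map (algebraMap 𝕜 A)).det) s := by
  refine analyticOnNhd_matrix_det fun i j => ?_
  simp only [mul_apply, map_apply, of_apply]
  refine Finset.analyticOnNhd_fun_sum _ fun k _ => analyticOnNhd_const.mul ?_
  let entry : (n → m → 𝕜) →L[𝕜] 𝕜 :=
    (ContinuousLinearMap.proj j).comp (ContinuousLinearMap.proj (R := 𝕜) (φ := fun _ => m → 𝕜) k)
  exact (algebraMapCLM 𝕜 A).comp_analyticOnNhd (entry.analyticOnNhd s)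

theorem stmt_2_general {𝕜 m n : Type*} [NormedField 𝕜] [NormedAlgebra ℝ 𝕜] [Fintype m]
    [DecidableEq m] [Fintype n] {M : Matrix m n 𝕜} (hM : M.rank = Fintype.card m) :
    volume {Y : n → m → ℝ | (M * (Matrix.of Y).map (algebraMap ℝ 𝕜)).det = 0} = 0 := by
  obtain ⟨Y₀, hY₀⟩ := exists_det_mul_map_algebraMap_ne_zero ℝ hM
  exact measure_eq_zero_iff_ae_notMem.2 <|
    ae_ne_zero_of_analyticOnNhd volume (analyticOnNhd_det_mul_map_algebraMap M Set.univ) hY₀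

/-- Let `M ∈ ℂ^{s×n}` with `s ≤ n` have full row rank `s`. Then the
set of real matrices `Y ∈ ℝ^{n×s}` for which the `s×s` complex matrix `M·Y` is
singular has Lebesgue measure zero in `ℝ^{n×s} ≅ ℝ^{ns}`. -/
theorem stmt_2 (n s : ℕ) (hs : s ≤ n) (M : Matrix (Fin s) (Fin n) ℂ)
    (hM : M.rank = s) :
    volume {Y : Fin n → Fin s → ℝ |
      (M * (Matrix.of Y).map (fun x : ℝ => (x : ℂ))).det = 0} = 0 :=
  stmt_2_general (hM.trans (Fintype.card_fin s).symm)
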